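/- Quadratic form of the majorant: under the hypotheses of the conforming majorant estimate, for every β > 0 and every v ∈ L²(Ω;ℝ^N) possessing a weak divergence div v ∈ L²₊₁(Ω), ‖∇(û − ũ)‖²_A ≤ c_{N,α}²(1 + 1/β)‖f + div v‖²_{L²₊₁(Ω)} + (1 + β)‖∇ũ − A^{−1}v‖²_A. -/

import Mathlib

open MeasureTheory Filter Topology
open scoped RealInnerProductSpace

noncomputable section

/-- Euclidean space `ℝ^N`. -/
abbrev Euc (N : ℕ) := EuclideanSpace ℝ (Fin N)

/-- The Poincaré constant `c_N = 2/(N-2)`. -/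
def cN (N : ℕ) : ℝ := 2 / ((N : ℝ) - 2)

variable {N : ℕ}

/-- Squared weighted `L²_s(Ω)` norm: `∫_Ω (1+|x|²)^s u(x)² dx`. -/
def sqL2 (Ω : Set (Euc N)) (s : ℝ) (u : Euc N → ℝ) : ℝ :=
  ∫ x in Ω, (1 + ‖x‖ ^ 2) ^ s * u x ^ 2

/-- Weighted `L²_s(Ω)` norm. -/
def nrmL2 (Ω : Set (Euc N)) (s : ℝ) (u : Euc N → ℝ) : ℝ :=
  Real.sqrt (sqL2 Ω s u)

/-- Membership in the weighted space `L²_s(Ω)` (scalar functions). -/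
def MemL2 (Ω : Set (Euc N)) (s : ℝ) (u : Euc N → ℝ) : Prop :=
  AEStronglyMeasurable u (volume.restrict Ω) ∧
    Integrable (fun x => (1 + ‖x‖ ^ 2) ^ s * u x ^ 2) (volume.restrict Ω)

/-- Squared weighted `L²_s(Ω;ℝ^N)` norm for vector fields. -/
def sqL2V (Ω : Set (Euc N)) (s : ℝ) (v : Euc N → Euc N) : ℝ :=
  ∫ x in Ω, (1 + ‖x‖ ^ 2) ^ s * ‖v x‖ ^ 2

/-- Weighted `L²_s(Ω;ℝ^N)` norm for vector fields. -/
def nrmL2V (Ω : Set (Euc N)) (s : ℝ) (v : Euc N → Euc N) : ℝ :=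
  Real.sqrt (sqL2V Ω s v)

/-- Membership in the weighted space `L²_s(Ω;ℝ^N)` (vector fields). -/
def MemL2V (Ω : Set (Euc N)) (s : ℝ) (v : Euc N → Euc N) : Prop :=
  AEStronglyMeasurable v (volume.restrict Ω) ∧
    Integrable (fun x => (1 + ‖x‖ ^ 2) ^ s * ‖v x‖ ^ 2) (volume.restrict Ω)

/-- Test functions: `φ ∈ C_c^∞(Ω)`. -/
def IsTest (Ω : Set (Euc N)) (φ : Euc N → ℝ) : Prop :=
  ContDiff ℝ (⊤ : ℕ∞) φ ∧ HasCompactSupport φ ∧ tsupport φ ⊆ Ω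

/-- `g` is the weak gradient of `u` on `Ω`:
`∫_Ω u ∇φ = −∫_Ω φ g` for all test functions `φ`. -/
def IsWeakGrad (Ω : Set (Euc N)) (u : Euc N → ℝ) (g : Euc N → Euc N) : Prop :=
  ∀ φ : Euc N → ℝ, IsTest Ω φ →
    (∫ x in Ω, u x • gradient φ x) = - ∫ x in Ω, φ x • g x

/-- `d` is the weak divergence of the vector field `v` on `Ω`:
`∫_Ω v·∇φ = −∫_Ω d φ` for all test functions `φ`. -/
def IsWeakDiv (Ω : Set (Euc N)) (v : Euc N → Euc N) (d : Euc N → ℝ) : Prop :=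
  ∀ φ : Euc N → ℝ, IsTest Ω φ →
    (∫ x in Ω, ⟪v x, gradient φ x⟫) = - ∫ x in Ω, d x * φ x

/-- `u ∈ H¹°₋₁(Ω)` with weak gradient `g`: `u ∈ L²₋₁(Ω)`, `g ∈ L²(Ω;ℝ^N)` is the weak
gradient of `u`, and `u` is approximated by test functions in the natural norms. -/
def MemH10 (Ω : Set (Euc N)) (u : Euc N → ℝ) (g : Euc N → Euc N) : Prop :=
  MemL2 Ω (-1) u ∧ MemL2V Ω 0 g ∧ IsWeakGrad Ω u g ∧
    ∃ φ : ℕ → Euc N → ℝ, (∀ n, IsTest Ω (φ n)) ∧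
      Tendsto (fun n => nrmL2 Ω (-1) (fun x => u x - φ n x)) atTop (𝓝 0) ∧
      Tendsto (fun n => nrmL2V Ω 0 (fun x => g x - gradient (φ n) x)) atTop (𝓝 0)

/-- `g ∈ 𝒢`, the closure in `L²(Ω;ℝ^N)` of `{∇φ : φ ∈ C_c^∞(Ω)}`. -/
def MemG (Ω : Set (Euc N)) (g : Euc N → Euc N) : Prop :=
  MemL2V Ω 0 g ∧
    ∃ φ : ℕ → Euc N → ℝ, (∀ n, IsTest Ω (φ n)) ∧
      Tendsto (fun n => nrmL2V Ω 0 (fun x => g x - gradient (φ n) x)) atTop (𝓝 0)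

/-- `ψ ∈ D₀`, the set of weakly divergence-free fields in `L²(Ω;ℝ^N)`. -/
def MemD0 (Ω : Set (Euc N)) (ψ : Euc N → Euc N) : Prop :=
  MemL2V Ω 0 ψ ∧
    ∀ φ : Euc N → ℝ, IsTest Ω φ → (∫ x in Ω, ⟪ψ x, gradient φ x⟫) = 0

/-- The coefficient matrix field `A : Ω → ℝ^{N×N}`: measurable, essentially bounded,
symmetric, and uniformly coercive (`A(x)ξ·ξ ≥ α⁻²|ξ|²` for a.e. `x ∈ Ω`). -/
structure Coeff (N : ℕ) (Ω : Set (Euc N)) where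
  A : Euc N → Euc N →L[ℝ] Euc N
  α : ℝ
  α_pos : 0 < α
  meas : ∀ ξ : Euc N, AEStronglyMeasurable (fun x => A x ξ) (volume.restrict Ω)
  bdd : ∃ C : ℝ, ∀ᵐ x ∂(volume.restrict Ω), ∀ ξ : Euc N, ‖A x ξ‖ ≤ C * ‖ξ‖
  symm : ∀ x : Euc N, ∀ ξ η : Euc N, ⟪A x ξ, η⟫ = ⟪ξ, A x η⟫
  coer : ∀ᵐ x ∂(volume.restrict Ω), ∀ ξ : Euc N, α⁻¹ ^ 2 * ‖ξ‖ ^ 2 ≤ ⟪A x ξ, ξ⟫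

/-- The weighted inner product `⟨v,w⟩_A = ∫_Ω A v · w dx`. -/
def ipA (Ω : Set (Euc N)) (A : Euc N → Euc N →L[ℝ] Euc N) (v w : Euc N → Euc N) : ℝ :=
  ∫ x in Ω, ⟪A x (v x), w x⟫

/-- The squared `A`-weighted norm `‖v‖²_A = ∫_Ω A v · v dx`. -/
def sqA (Ω : Set (Euc N)) (A : Euc N → Euc N →L[ℝ] Euc N) (v : Euc N → Euc N) : ℝ :=
  ipA Ω A v v

/-- The `A`-weighted norm `‖v‖_A`. -/
def nrmA (Ω : Set (Euc N)) (A : Euc N → Euc N →L[ℝ] Euc N) (v : Euc N → Euc N) : ℝ :=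
  Real.sqrt (sqA Ω A v)

/-- `w = A⁻¹ v` (a.e. on `Ω`), with `w ∈ L²(Ω;ℝ^N)`. -/
def IsAInv (Ω : Set (Euc N)) (A : Euc N → Euc N →L[ℝ] Euc N) (v w : Euc N → Euc N) : Prop :=
  MemL2V Ω 0 w ∧ ∀ᵐ x ∂(volume.restrict Ω), A x (w x) = v x

/-!
Testing the field `x ↦ x` against `φ² / (1 + |x|²)` gives, after Cauchy–Schwarz, the weighted
Poincaré–Hardy inequality `‖φ‖_{L²₋₁} ≤ c_N ‖∇φ‖` for test functions. By duality a field `r` with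
divergence in `L²₊₁` satisfies `|∫ r · g| ≤ c_N ‖div r‖_{L²₊₁} ‖g‖` for every `g` in the closure of
the test gradients. For the error `g = ∇û - ∇ũ` and `w = A⁻¹v` write
`‖g‖²_A = -⟨w - ∇û, g⟩_A - ⟨∇ũ - w, g⟩_A`. The field `A (w - ∇û)` has divergence `f + div v`, so
the first term is controlled by duality and the second by Cauchy–Schwarz; dividing by `‖g‖_A` and
squaring with Young's inequality concludes.
-/

section IntegralInequalities

variable {X : Type*} [MeasurableSpace X] {μ : Measure X}

theorem inner_toLp_toLp {E : Type*} [NormedAddCommGroup E] [InnerProductSpace ℝ E] {f g : X → E}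
    (hf : MemLp f 2 μ) (hg : MemLp g 2 μ) :
    ⟪hf.toLp f, hg.toLp g⟫ = ∫ x, ⟪f x, g x⟫ ∂μ := by
  rw [L2.inner_def]
  refine integral_congr_ae ?_
  filter_upwards [hf.coeFn_toLp, hg.coeFn_toLp] with x hfx hgx
  rw [hfx, hgx]

theorem norm_toLp_two {E : Type*} [NormedAddCommGroup E] [InnerProductSpace ℝ E] {f : X → E}
    (hf : MemLp f 2 μ) : ‖hf.toLp f‖ = √(∫ x, ‖f x‖ ^ 2 ∂μ) := by
  simp only [norm_eq_sqrt_real_inner (hf.toLp f), inner_toLp_toLp hf hf,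
    real_inner_self_eq_norm_sq]

theorem integrable_inner_of_memLp_two {E : Type*} [NormedAddCommGroup E] [InnerProductSpace ℝ E]
    {f g : X → E} (hf : MemLp f 2 μ) (hg : MemLp g 2 μ) : Integrable (fun x ↦ ⟪f x, g x⟫) μ := by
  refine (L2.integrable_inner (𝕜 := ℝ) hf.toLp hg.toLp).congr ?_
  filter_upwards [hf.coeFn_toLp, hg.coeFn_toLp] with x hfx hgx
  rw [hfx, hgx]

theorem integrable_of_sq_le_mul {P Q R : X → ℝ} (hP : Integrable P μ) (hQ : Integrable Q μ)
    (hR : AEStronglyMeasurable R μ) (hP₀ : 0 ≤ᵐ[μ] P) (hQ₀ : 0 ≤ᵐ[μ] Q)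
    (h : ∀ᵐ x ∂μ, R x ^ 2 ≤ P x * Q x) : Integrable R μ := by
  refine (hP.add hQ).mono' hR ?_
  filter_upwards [hP₀, hQ₀, h] with x hPx hQx hx
  rw [Pi.zero_apply] at hPx hQx
  exact abs_le_of_sq_le_sq (by rw [Pi.add_apply]; nlinarith) (add_nonneg hPx hQx)

theorem memLp_two_sqrt {P : X → ℝ} (hP : Integrable P μ) (hP₀ : 0 ≤ᵐ[μ] P) :
    MemLp (fun x ↦ √(P x)) 2 μ := by
  refine (memLp_two_iff_integrable_sq hP.aemeasurable.sqrt.aestronglyMeasurable).2 (hP.congr ?_)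
  filter_upwards [hP₀] with x hPx using (Real.sq_sqrt hPx).symm

theorem abs_integral_le_sqrt_mul_sqrt {P Q R : X → ℝ} (hP : Integrable P μ) (hQ : Integrable Q μ)
    (hP₀ : 0 ≤ᵐ[μ] P) (hQ₀ : 0 ≤ᵐ[μ] Q) (h : ∀ᵐ x ∂μ, R x ^ 2 ≤ P x * Q x) :
    |∫ x, R x ∂μ| ≤ √(∫ x, P x ∂μ) * √(∫ x, Q x ∂μ) := by
  have hp := memLp_two_sqrt hP hP₀
  have hq := memLp_two_sqrt hQ hQ₀
  have norm_toLp_sqrt {P : X → ℝ} (hP₀ : 0 ≤ᵐ[μ] P) (hp : MemLp (fun x ↦ √(P x)) 2 μ) :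
      ‖hp.toLp‖ = √(∫ x, P x ∂μ) := by
    rw [norm_toLp_two hp]
    congr 1
    refine integral_congr_ae ?_
    filter_upwards [hP₀] with x hPx
    rw [Real.norm_eq_abs, sq_abs, Real.sq_sqrt hPx]
  calc |∫ x, R x ∂μ| ≤ ∫ x, ⟪√(P x), √(Q x)⟫ ∂μ := by
        rw [← Real.norm_eq_abs]
        refine norm_integral_le_of_norm_le (integrable_inner_of_memLp_two hp hq) ?_
        filter_upwards [hP₀, h] with x hPx hx
        rw [Real.inner_apply, ← Real.sqrt_mul hPx]
        exact Real.abs_le_sqrt hx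
    _ = ⟪hp.toLp (fun x ↦ √(P x)), hq.toLp (fun x ↦ √(Q x))⟫ := (inner_toLp_toLp hp hq).symm
    _ ≤ √(∫ x, P x ∂μ) * √(∫ x, Q x ∂μ) := by
        rw [← norm_toLp_sqrt hP₀ hp, ← norm_toLp_sqrt hQ₀ hq]
        exact real_inner_le_norm _ _

end IntegralInequalities

section Hardy

variable {E : Type*} [NormedAddCommGroup E]

theorem fderiv_sq_mul_inv_one_add_norm_sq_apply_self [InnerProductSpace ℝ E] {φ : E → ℝ} {x : E}
    (hφ : DifferentiableAt ℝ φ x) :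
    fderiv ℝ (fun y ↦ φ y ^ 2 * (1 + ‖y‖ ^ 2)⁻¹) x x =
      2 * (φ x * (1 + ‖x‖ ^ 2)⁻¹ * fderiv ℝ φ x x) -
        2 * (φ x ^ 2 * (1 + ‖x‖ ^ 2)⁻¹ * (‖x‖ ^ 2 * (1 + ‖x‖ ^ 2)⁻¹)) := by
  have hweight := (hasDerivAt_inv (by positivity : 1 + ‖x‖ ^ 2 ≠ 0)).comp_hasFDerivAt x
    ((hasStrictFDerivAt_norm_sq x).hasFDerivAt.const_add 1)
  have : HasFDerivAt (fun y ↦ φ y ^ 2 * (1 + ‖y‖ ^ 2)⁻¹) _ x := (hφ.hasFDerivAt.pow 2).mul hweight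
  rw [this.fderiv]
  simp [← inv_pow]
  ring

variable [MeasurableSpace E] [BorelSpace E]

theorem integral_fderiv_apply_self [NormedSpace ℝ E] [FiniteDimensional ℝ E]
    {F : Type*} [NormedAddCommGroup F] [NormedSpace ℝ F] (μ : Measure E) [μ.IsAddHaarMeasure]
    {ψ : E → F} (hψ : ContDiff ℝ 1 ψ) (hc : HasCompactSupport ψ) :
    ∫ x, fderiv ℝ ψ x x ∂μ = -((Module.finrank ℝ E : ℝ) • ∫ x, ψ x ∂μ) := by
  let b := Module.finBasis ℝ E
  let coord (i) : E →L[ℝ] ℝ := LinearMap.toContinuousLinearMap (b.coord i)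
  have hψ' : Continuous (fderiv ℝ ψ) := hψ.continuous_fderiv one_ne_zero
  have hψ_int : Integrable ψ μ := hψ.continuous.integrable_of_hasCompactSupport hc
  have hderiv_int (i) : Integrable (fun x ↦ coord i x • fderiv ℝ ψ x (b i)) μ :=
    ((coord i).continuous.smul (hψ'.clm_apply continuous_const)).integrable_of_hasCompactSupport
      (hc.fderiv_apply ℝ (b i)).smul_left
  have integral_coord (i) : ∫ x, coord i x • fderiv ℝ ψ x (b i) ∂μ = -∫ x, ψ x ∂μ := by
    have hcoord (x : E) : fderiv ℝ (coord i) x (b i) = 1 := by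
      rw [ContinuousLinearMap.fderiv]
      simp [coord]
    rw [integral_smul_fderiv_eq_neg_fderiv_smul_of_integrable (by simpa only [hcoord, one_smul])
      (hderiv_int i) ?_ (fun x _ ↦ by fun_prop) (fun x _ ↦ hψ.differentiable one_ne_zero x)]
    · simp only [hcoord, one_smul]
    · exact ((coord i).continuous.smul hψ.continuous).integrable_of_hasCompactSupport hc.smul_left
  calc ∫ x, fderiv ℝ ψ x x ∂μ = ∫ x, ∑ i, coord i x • fderiv ℝ ψ x (b i) ∂μ := by
        congr! with x
        conv_lhs => rw [← b.sum_repr x, map_sum]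
        simp [coord]
    _ = _ := by
        simp only [integral_finsetSum _ fun i _ ↦ hderiv_int i, integral_coord]
        simp [Nat.cast_smul_eq_nsmul]

variable [InnerProductSpace ℝ E] [FiniteDimensional ℝ E] (μ : Measure E) [μ.IsAddHaarMeasure]
  {φ : E → ℝ}

theorem finrank_sub_two_mul_integral_le (hφ : ContDiff ℝ 1 φ) (hc : HasCompactSupport φ) :
    ((Module.finrank ℝ E : ℝ) - 2) * ∫ x, φ x ^ 2 * (1 + ‖x‖ ^ 2)⁻¹ ∂μ ≤
      -(2 * ∫ x, φ x * (1 + ‖x‖ ^ 2)⁻¹ * fderiv ℝ φ x x ∂μ) := by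
  set w : E → ℝ := fun x ↦ (1 + ‖x‖ ^ 2)⁻¹
  set ψ : E → ℝ := fun x ↦ φ x ^ 2 * w x
  have hw : ContDiff ℝ 1 w := (contDiff_const.add (contDiff_norm_sq ℝ)).inv fun x ↦ by positivity
  have hψ : ContDiff ℝ 1 ψ := (hφ.pow 2).mul hw
  have hψc : HasCompactSupport ψ := .intro hc fun x hx ↦ by
    simp [ψ, image_eq_zero_of_notMem_tsupport hx]
  have hψ_int : Integrable ψ μ := hψ.continuous.integrable_of_hasCompactSupport hψc
  have hψ'_int : Integrable (fun x ↦ fderiv ℝ ψ x x) μ :=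
    ((hψ.continuous_fderiv one_ne_zero).clm_apply continuous_id).integrable_of_hasCompactSupport
      (.intro hψc fun x hx ↦ by simp [fderiv_of_notMem_tsupport ℝ hx])
  have hcross_int : Integrable (fun x ↦ φ x * w x * fderiv ℝ φ x x) μ :=
    ((hφ.continuous.mul hw.continuous).mul
      ((hφ.continuous_fderiv one_ne_zero).clm_apply continuous_id)).integrable_of_hasCompactSupport
      hc.mul_right.mul_right
  have pointwise (x : E) : 2 * (φ x * w x * fderiv ℝ φ x x) - 2 * ψ x ≤ fderiv ℝ ψ x x := by
    have hw_le : ‖x‖ ^ 2 * w x ≤ 1 := mul_inv_le_one_of_le₀ (by linarith) (by positivity)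
    rw [fderiv_sq_mul_inv_one_add_norm_sq_apply_self (hφ.differentiable one_ne_zero x)]
    have : ψ x * (‖x‖ ^ 2 * w x) ≤ ψ x := mul_le_of_le_one_right (by positivity) hw_le
    linarith
  have : 2 * ∫ x, φ x * w x * fderiv ℝ φ x x ∂μ - 2 * ∫ x, ψ x ∂μ ≤
      -(Module.finrank ℝ E * ∫ x, ψ x ∂μ) := by
    rw [← integral_const_mul, ← integral_const_mul,
      ← integral_sub (hcross_int.const_mul 2) (hψ_int.const_mul 2),
      ← smul_eq_mul (b := ∫ x, ψ x ∂μ), ← integral_fderiv_apply_self μ hψ hψc]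
    exact integral_mono ((hcross_int.const_mul 2).sub (hψ_int.const_mul 2)) hψ'_int pointwise
  linarith

theorem hardy_inequality (hφ : ContDiff ℝ 1 φ) (hc : HasCompactSupport φ) :
    ((Module.finrank ℝ E : ℝ) - 2) * √(∫ x, φ x ^ 2 * (1 + ‖x‖ ^ 2)⁻¹ ∂μ) ≤
      2 * √(∫ x, ‖fderiv ℝ φ x‖ ^ 2 ∂μ) := by
  set H := ∫ x, φ x ^ 2 * (1 + ‖x‖ ^ 2)⁻¹ ∂μ
  set D := ∫ x, ‖fderiv ℝ φ x‖ ^ 2 ∂μ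
  have hH : 0 ≤ H := integral_nonneg fun x ↦ by positivity
  have weight_continuous : Continuous fun x : E ↦ (1 + ‖x‖ ^ 2)⁻¹ :=
    Continuous.inv₀ (by fun_prop) fun x ↦ by positivity
  have cross : |∫ x, φ x * (1 + ‖x‖ ^ 2)⁻¹ * fderiv ℝ φ x x ∂μ| ≤ √H * √D := by
    refine abs_integral_le_sqrt_mul_sqrt
      (((hφ.continuous.pow 2).mul weight_continuous).integrable_of_hasCompactSupport
        (.intro hc fun x hx ↦ by simp [image_eq_zero_of_notMem_tsupport hx]))
      (((hφ.continuous_fderiv one_ne_zero).norm.pow 2).integrable_of_hasCompactSupport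
        (.intro hc fun x hx ↦ by simp [fderiv_of_notMem_tsupport ℝ hx]))
      (.of_forall fun x ↦ by positivity) (.of_forall fun x ↦ by positivity)
      (.of_forall fun x ↦ ?_)
    have hderiv : fderiv ℝ φ x x ^ 2 ≤ ‖fderiv ℝ φ x‖ ^ 2 * ‖x‖ ^ 2 := by
      rw [← sq_abs, ← mul_pow]
      gcongr
      exact (fderiv ℝ φ x).le_opNorm x
    have weight_le : ‖x‖ ^ 2 * (1 + ‖x‖ ^ 2)⁻¹ ≤ 1 :=
      mul_inv_le_one_of_le₀ (by linarith) (by positivity)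
    calc (φ x * (1 + ‖x‖ ^ 2)⁻¹ * fderiv ℝ φ x x) ^ 2
        ≤ (φ x * (1 + ‖x‖ ^ 2)⁻¹) ^ 2 * (‖fderiv ℝ φ x‖ ^ 2 * ‖x‖ ^ 2) := by
          rw [mul_pow]
          gcongr
      _ = φ x ^ 2 * (1 + ‖x‖ ^ 2)⁻¹ * ‖fderiv ℝ φ x‖ ^ 2 * (‖x‖ ^ 2 * (1 + ‖x‖ ^ 2)⁻¹) := by ring
      _ ≤ φ x ^ 2 * (1 + ‖x‖ ^ 2)⁻¹ * ‖fderiv ℝ φ x‖ ^ 2 :=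
          mul_le_of_le_one_right (by positivity) weight_le
  rcases hH.eq_or_lt with hH₀ | hH_pos
  · rw [← hH₀, Real.sqrt_zero, mul_zero]
    positivity
  · refine le_of_mul_le_mul_right ?_ (Real.sqrt_pos.2 hH_pos)
    calc ((Module.finrank ℝ E : ℝ) - 2) * √H * √H = ((Module.finrank ℝ E : ℝ) - 2) * H := by
          rw [mul_assoc, Real.mul_self_sqrt hH]
      _ ≤ 2 * (√H * √D) := by
          linarith [finrank_sub_two_mul_integral_le μ hφ hc, neg_le_of_abs_le cross]
      _ = 2 * √D * √H := by ring

end Hardy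

section WeightedSpaces

variable {Ω : Set (Euc N)} {s : ℝ}

theorem memL2V_zero_iff {v : Euc N → Euc N} :
    MemL2V Ω 0 v ↔ MemLp v 2 (volume.restrict Ω) := by
  simp only [MemL2V, Real.rpow_zero, one_mul]
  exact ⟨fun h ↦ (memLp_two_iff_integrable_sq_norm h.1).2 h.2,
    fun h ↦ ⟨h.1, (memLp_two_iff_integrable_sq_norm h.1).1 h⟩⟩

theorem norm_toLp_eq_nrmL2V {v : Euc N → Euc N} (hv : MemLp v 2 (volume.restrict Ω)) :
    ‖hv.toLp v‖ = nrmL2V Ω 0 v := by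
  simp only [norm_toLp_two hv, nrmL2V, sqL2V, Real.rpow_zero, one_mul]

theorem continuous_one_add_norm_sq_rpow (s : ℝ) :
    Continuous fun x : Euc N ↦ (1 + ‖x‖ ^ 2) ^ s :=
  Continuous.rpow_const (by fun_prop) fun x ↦ Or.inl (by positivity)

theorem sq_nrmL2 (u : Euc N → ℝ) : nrmL2 Ω s u ^ 2 = sqL2 Ω s u :=
  Real.sq_sqrt (integral_nonneg fun x ↦ by positivity)

theorem MemL2.add {u k : Euc N → ℝ} (hu : MemL2 Ω s u) (hk : MemL2 Ω s k) :
    MemL2 Ω s (fun x ↦ u x + k x) := by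
  refine ⟨hu.1.add hk.1, ((hu.2.const_mul 2).add (hk.2.const_mul 2)).mono'
    ((continuous_one_add_norm_sq_rpow s).aestronglyMeasurable.mul ((hu.1.add hk.1).pow 2))
    (.of_forall fun x ↦ ?_)⟩
  calc ‖(1 + ‖x‖ ^ 2) ^ s * (u x + k x) ^ 2‖ = (1 + ‖x‖ ^ 2) ^ s * (u x + k x) ^ 2 :=
        Real.norm_of_nonneg (by positivity)
    _ ≤ (1 + ‖x‖ ^ 2) ^ s * (2 * (u x ^ 2 + k x ^ 2)) := by
        gcongr
        exact add_sq_le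
    _ = 2 * ((1 + ‖x‖ ^ 2) ^ s * u x ^ 2) + 2 * ((1 + ‖x‖ ^ 2) ^ s * k x ^ 2) := by ring

theorem sq_mul_eq_weight_mul_weight (s a b : ℝ) (x : Euc N) :
    (a * b) ^ 2 = (1 + ‖x‖ ^ 2) ^ s * a ^ 2 * ((1 + ‖x‖ ^ 2) ^ (-s) * b ^ 2) := by
  rw [mul_mul_mul_comm, ← Real.rpow_add (by positivity), add_neg_cancel, Real.rpow_zero, one_mul,
    mul_pow]

theorem MemL2.integrable_mul {k u : Euc N → ℝ} (hk : MemL2 Ω s k) (hu : MemL2 Ω (-s) u) :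
    Integrable (fun x ↦ k x * u x) (volume.restrict Ω) :=
  integrable_of_sq_le_mul hk.2 hu.2 (hk.1.mul hu.1) (.of_forall fun x ↦ by positivity)
    (.of_forall fun x ↦ by positivity)
    (.of_forall fun x ↦ (sq_mul_eq_weight_mul_weight s (k x) (u x) x).le)

theorem MemL2.abs_integral_mul_le {k u : Euc N → ℝ} (hk : MemL2 Ω s k) (hu : MemL2 Ω (-s) u) :
    |∫ x in Ω, k x * u x| ≤ nrmL2 Ω s k * nrmL2 Ω (-s) u :=
  abs_integral_le_sqrt_mul_sqrt hk.2 hu.2 (.of_forall fun x ↦ by positivity)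
    (.of_forall fun x ↦ by positivity)
    (.of_forall fun x ↦ (sq_mul_eq_weight_mul_weight s (k x) (u x) x).le)

end WeightedSpaces

section TestFunctions

variable {Ω : Set (Euc N)} {φ : Euc N → ℝ}

theorem gradient_eq_zero_of_notMem_tsupport {x : Euc N} (hx : x ∉ tsupport φ) :
    gradient φ x = 0 := by
  rw [gradient, fderiv_of_notMem_tsupport ℝ hx, map_zero]

theorem IsTest.memL2 (hφ : IsTest Ω φ) (s : ℝ) : MemL2 Ω s φ := by
  have hcont : Continuous fun x ↦ (1 + ‖x‖ ^ 2) ^ s * φ x ^ 2 :=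
    (continuous_one_add_norm_sq_rpow s).mul (hφ.1.continuous.pow 2)
  exact ⟨hφ.1.continuous.aestronglyMeasurable, (hcont.integrable_of_hasCompactSupport
    (.intro hφ.2.1 fun x hx ↦ by simp [image_eq_zero_of_notMem_tsupport hx])).restrict⟩

theorem IsTest.memLp_gradient (hφ : IsTest Ω φ) (p : ENNReal) :
    MemLp (gradient φ) p (volume.restrict Ω) := by
  have hcont : Continuous (gradient φ) :=
    (LinearIsometryEquiv.continuous _).comp (hφ.1.continuous_fderiv (by simp))
  exact (hcont.memLp_of_hasCompactSupport
    (.intro hφ.2.1 fun x hx ↦ gradient_eq_zero_of_notMem_tsupport hx)).restrict Ω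

theorem cN_pos (hN : 3 ≤ N) : 0 < cN N := by
  have : (3 : ℝ) ≤ N := by exact_mod_cast hN
  exact div_pos two_pos (by linarith)

theorem IsTest.nrmL2_le_nrmL2V_gradient (hφ : IsTest Ω φ) (hN : 3 ≤ N) :
    nrmL2 Ω (-1) φ ≤ cN N * nrmL2V Ω 0 (gradient φ) := by
  have hN' : (3 : ℝ) ≤ N := by exact_mod_cast hN
  have notMem_tsupport {x : Euc N} (hx : x ∉ Ω) : x ∉ tsupport φ := fun h ↦ hx (hφ.2.2 h)
  have integral_left : sqL2 Ω (-1) φ = ∫ x, φ x ^ 2 * (1 + ‖x‖ ^ 2)⁻¹ := by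
    simp_rw [sqL2, Real.rpow_neg_one, mul_comm _ (φ _ ^ 2)]
    exact setIntegral_eq_integral_of_forall_compl_eq_zero fun x hx ↦ by
      simp [image_eq_zero_of_notMem_tsupport (notMem_tsupport hx)]
  have integral_right : sqL2V Ω 0 (gradient φ) = ∫ x, ‖fderiv ℝ φ x‖ ^ 2 := by
    simp_rw [sqL2V, Real.rpow_zero, one_mul, gradient, LinearIsometryEquiv.norm_map]
    exact setIntegral_eq_integral_of_forall_compl_eq_zero fun x hx ↦ by
      simp [fderiv_of_notMem_tsupport ℝ (notMem_tsupport hx)]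
  have hardy := hardy_inequality volume (hφ.1.of_le (by exact_mod_cast le_top)) hφ.2.1
  rw [← integral_left, ← integral_right, finrank_euclideanSpace_fin] at hardy
  rw [cN, div_mul_eq_mul_div, le_div_iff₀' (by linarith)]
  exact hardy

end TestFunctions

section WeakDivergence

variable {Ω : Set (Euc N)} {v g : Euc N → Euc N} {d : Euc N → ℝ}

theorem MemG.abs_integral_inner_le (hg : MemG Ω g) (hv : MemLp v 2 (volume.restrict Ω)) {C : ℝ}
    (hC : ∀ φ, IsTest Ω φ → |∫ x in Ω, ⟪v x, gradient φ x⟫| ≤ C * nrmL2V Ω 0 (gradient φ)) :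
    |∫ x in Ω, ⟪v x, g x⟫| ≤ C * nrmL2V Ω 0 g := by
  obtain ⟨hg₂, φ, hφ, hlim⟩ := hg
  have hg₂ := memL2V_zero_iff.1 hg₂
  have hφ₂ (n) := (hφ n).memLp_gradient 2
  have hlim_Lp : Tendsto (fun n ↦ (hφ₂ n).toLp) atTop (𝓝 hg₂.toLp) := by
    refine tendsto_iff_norm_sub_tendsto_zero.2 (hlim.congr fun n ↦ ?_)
    rw [norm_sub_rev, ← MemLp.toLp_sub, norm_toLp_eq_nrmL2V]
    rfl
  rw [← inner_toLp_toLp hv hg₂, ← norm_toLp_eq_nrmL2V hg₂]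
  refine le_of_tendsto_of_tendsto' (tendsto_const_nhds.inner hlim_Lp).abs
    (hlim_Lp.norm.const_mul C) fun n ↦ ?_
  rw [inner_toLp_toLp hv (hφ₂ n), norm_toLp_eq_nrmL2V]
  exact hC (φ n) (hφ n)

theorem IsWeakDiv.abs_integral_inner_le (hdiv : IsWeakDiv Ω v d) (hN : 3 ≤ N)
    (hv : MemLp v 2 (volume.restrict Ω)) (hd : MemL2 Ω 1 d) (hg : MemG Ω g) :
    |∫ x in Ω, ⟪v x, g x⟫| ≤ cN N * nrmL2 Ω 1 d * nrmL2V Ω 0 g := by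
  refine hg.abs_integral_inner_le hv fun φ hφ ↦ ?_
  rw [hdiv φ hφ, abs_neg]
  calc |∫ x in Ω, d x * φ x| ≤ nrmL2 Ω 1 d * nrmL2 Ω (-1) φ := hd.abs_integral_mul_le (hφ.memL2 _)
    _ ≤ nrmL2 Ω 1 d * (cN N * nrmL2V Ω 0 (gradient φ)) :=
        mul_le_mul_of_nonneg_left (hφ.nrmL2_le_nrmL2V_gradient hN) (Real.sqrt_nonneg _)
    _ = cN N * nrmL2 Ω 1 d * nrmL2V Ω 0 (gradient φ) := by ring

theorem MemH10.memG {u : Euc N → ℝ} (h : MemH10 Ω u g) : MemG Ω g :=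
  let ⟨_, hg, _, φ, hφ, _, hlim⟩ := h
  ⟨hg, φ, hφ, hlim⟩

end WeakDivergence

namespace Coeff

variable {Ω : Set (Euc N)} (M : Coeff N Ω) {v w g : Euc N → Euc N}

theorem memLp_apply {p : ENNReal} (hv : MemLp v p (volume.restrict Ω)) :
    MemLp (fun x ↦ M.A x (v x)) p (volume.restrict Ω) := by
  have apply_eq_sum (x : Euc N) :
      M.A x (v x) = ∑ i, v x i • M.A x (EuclideanSpace.single i 1) := by
    conv_lhs => rw [← (EuclideanSpace.basisFun (Fin N) ℝ).sum_repr (v x)]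
    simp
  have hmeas : AEStronglyMeasurable (fun x ↦ M.A x (v x)) (volume.restrict Ω) := by
    simp only [apply_eq_sum]
    exact Finset.aestronglyMeasurable_fun_sum _ fun i _ ↦
      ((EuclideanSpace.proj (𝕜 := ℝ) i).continuous.comp_aestronglyMeasurable hv.1).smul (M.meas _)
  obtain ⟨C, hC⟩ := M.bdd
  exact hv.of_le_mul hmeas (hC.mono fun x hx ↦ hx (v x))

theorem inner_apply_nonneg : ∀ᵐ x ∂volume.restrict Ω, ∀ ξ, 0 ≤ ⟪M.A x ξ, ξ⟫ :=
  M.coer.mono fun _ hx ξ ↦ le_trans (by positivity) (hx ξ)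

theorem sq_inner_apply_le : ∀ᵐ x ∂volume.restrict Ω, ∀ ξ η,
    ⟪M.A x ξ, η⟫ ^ 2 ≤ ⟪M.A x ξ, ξ⟫ * ⟪M.A x η, η⟫ := by
  filter_upwards [M.inner_apply_nonneg] with x hx ξ η
  exact LinearMap.BilinForm.apply_sq_le_of_symm ((innerₗ (Euc N)) ∘ₗ (M.A x).toLinearMap) hx
    ⟨fun ξ η ↦ by simp [M.symm x ξ η, real_inner_comm]⟩ ξ η

theorem sqA_nonneg (v : Euc N → Euc N) : 0 ≤ sqA Ω M.A v :=
  integral_nonneg_of_ae (M.inner_apply_nonneg.mono fun x hx ↦ hx (v x))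

theorem sq_nrmA (v : Euc N → Euc N) : nrmA Ω M.A v ^ 2 = sqA Ω M.A v :=
  Real.sq_sqrt (M.sqA_nonneg v)

theorem integrable_inner_apply (hv : MemLp v 2 (volume.restrict Ω))
    (hw : MemLp w 2 (volume.restrict Ω)) :
    Integrable (fun x ↦ ⟪M.A x (v x), w x⟫) (volume.restrict Ω) :=
  integrable_inner_of_memLp_two (M.memLp_apply hv) hw

theorem abs_ipA_le (hv : MemLp v 2 (volume.restrict Ω)) (hw : MemLp w 2 (volume.restrict Ω)) :
    |ipA Ω M.A v w| ≤ nrmA Ω M.A v * nrmA Ω M.A w :=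
  abs_integral_le_sqrt_mul_sqrt (M.integrable_inner_apply hv hv) (M.integrable_inner_apply hw hw)
    (M.inner_apply_nonneg.mono fun x hx ↦ hx (v x)) (M.inner_apply_nonneg.mono fun x hx ↦ hx (w x))
    (M.sq_inner_apply_le.mono fun x hx ↦ hx (v x) (w x))

theorem nrmL2V_le_mul_nrmA (hv : MemLp v 2 (volume.restrict Ω)) :
    nrmL2V Ω 0 v ≤ M.α * nrmA Ω M.A v := by
  refine Real.sqrt_le_iff.2 ⟨mul_nonneg M.α_pos.le (Real.sqrt_nonneg _), ?_⟩
  rw [mul_pow, M.sq_nrmA, sqA, ipA, ← integral_const_mul]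
  refine integral_mono_ae (memL2V_zero_iff.2 hv).2 ((M.integrable_inner_apply hv hv).const_mul _) ?_
  filter_upwards [M.coer] with x hx
  have := hx (v x)
  rw [inv_pow, inv_mul_le_iff₀ (pow_pos M.α_pos 2)] at this
  simpa only [Real.rpow_zero, one_mul] using this

theorem ipA_add_ipA_eq_neg_ipA {p q : Euc N → Euc N} (hp : MemLp p 2 (volume.restrict Ω))
    (hq : MemLp q 2 (volume.restrict Ω)) (hw : MemLp w 2 (volume.restrict Ω))
    (hg : MemLp g 2 (volume.restrict Ω)) :
    ipA Ω M.A (fun x ↦ w x - p x) g + ipA Ω M.A (fun x ↦ q x - w x) g =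
      -ipA Ω M.A (fun x ↦ p x - q x) g := by
  simp only [ipA]
  rw [← integral_add (M.integrable_inner_apply (v := fun x ↦ w x - p x) (hw.sub hp) hg)
    (M.integrable_inner_apply (v := fun x ↦ q x - w x) (hq.sub hw) hg), ← integral_neg]
  refine integral_congr_ae (.of_forall fun x ↦ ?_)
  simp only [map_sub, inner_sub_left]
  ring

theorem isWeakDiv_residual {s t : ℝ} {f d : Euc N → ℝ} {p : Euc N → Euc N} (hf : MemL2 Ω s f)
    (hp : MemLp p 2 (volume.restrict Ω))
    (hweak : ∀ φ, IsTest Ω φ → ∫ x in Ω, ⟪M.A x (p x), gradient φ x⟫ = ∫ x in Ω, f x * φ x)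
    (hd : MemL2 Ω t d) (hdiv : IsWeakDiv Ω v d) (hw : IsAInv Ω M.A v w) :
    IsWeakDiv Ω (fun x ↦ M.A x (w x - p x)) (fun x ↦ f x + d x) := fun φ hφ ↦ by
  have hgrad := hφ.memLp_gradient 2
  have hv : ∫ x in Ω, ⟪M.A x (w x), gradient φ x⟫ = ∫ x in Ω, ⟪v x, gradient φ x⟫ :=
    integral_congr_ae (hw.2.mono fun x hx ↦ by simp only [hx])
  simp only [map_sub, inner_sub_left, add_mul]
  rw [integral_sub (M.integrable_inner_apply (memL2V_zero_iff.1 hw.1) hgrad)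
    (M.integrable_inner_apply hp hgrad), hv, hdiv φ hφ, hweak φ hφ,
    integral_add (hf.integrable_mul (hφ.memL2 _)) (hd.integrable_mul (hφ.memL2 _))]
  ring

theorem nrmA_sub_le_majorant (hN : 3 ≤ N) {p q : Euc N → Euc N} {d : Euc N → ℝ}
    (hp : MemLp p 2 (volume.restrict Ω)) (hw : MemLp w 2 (volume.restrict Ω))
    (hg : MemG Ω (fun x ↦ p x - q x)) (hd : MemL2 Ω 1 d)
    (hdiv : IsWeakDiv Ω (fun x ↦ M.A x (w x - p x)) d) :
    nrmA Ω M.A (fun x ↦ p x - q x) ≤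
      M.α * cN N * nrmL2 Ω 1 d + nrmA Ω M.A (fun x ↦ q x - w x) := by
  set g : Euc N → Euc N := fun x ↦ p x - q x
  have hg₂ : MemLp g 2 (volume.restrict Ω) := memL2V_zero_iff.1 hg.1
  have hq : MemLp q 2 (volume.restrict Ω) := by simpa [g, Pi.sub_def] using hp.sub hg₂
  have equilibration : |ipA Ω M.A (fun x ↦ w x - p x) g| ≤
      M.α * cN N * nrmL2 Ω 1 d * nrmA Ω M.A g :=
    calc |ipA Ω M.A (fun x ↦ w x - p x) g| ≤ cN N * nrmL2 Ω 1 d * nrmL2V Ω 0 g :=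
          hdiv.abs_integral_inner_le hN (M.memLp_apply (hw.sub hp)) hd hg
      _ ≤ cN N * nrmL2 Ω 1 d * (M.α * nrmA Ω M.A g) :=
          mul_le_mul_of_nonneg_left (M.nrmL2V_le_mul_nrmA hg₂)
            (mul_nonneg (cN_pos hN).le (Real.sqrt_nonneg _))
      _ = M.α * cN N * nrmL2 Ω 1 d * nrmA Ω M.A g := by ring
  have flux : |ipA Ω M.A (fun x ↦ q x - w x) g| ≤
      nrmA Ω M.A (fun x ↦ q x - w x) * nrmA Ω M.A g :=
    M.abs_ipA_le (hq.sub hw) hg₂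
  have split : ipA Ω M.A (fun x ↦ w x - p x) g + ipA Ω M.A (fun x ↦ q x - w x) g =
      -nrmA Ω M.A g ^ 2 := by
    rw [M.sq_nrmA, M.ipA_add_ipA_eq_neg_ipA hp hq hw hg₂, sqA]
  have hg_nonneg : 0 ≤ nrmA Ω M.A g := Real.sqrt_nonneg _
  rcases hg_nonneg.eq_or_lt with hg₀ | hg_pos
  · rw [← hg₀]
    exact add_nonneg (mul_nonneg (mul_nonneg M.α_pos.le (cN_pos hN).le) (Real.sqrt_nonneg _))
      (Real.sqrt_nonneg _)
  · refine le_of_mul_le_mul_right ?_ hg_pos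
    linarith [neg_le_of_abs_le equilibration, neg_le_of_abs_le flux]

end Coeff

theorem sq_add_le_young {β : ℝ} (hβ : 0 < β) (a b : ℝ) :
    (a + b) ^ 2 ≤ (1 + 1 / β) * a ^ 2 + (1 + β) * b ^ 2 := by
  have : (1 + 1 / β) * a ^ 2 + (1 + β) * b ^ 2 - (a + b) ^ 2 = (a - β * b) ^ 2 / β := by
    field_simp
    ring
  linarith [div_nonneg (sq_nonneg (a - β * b)) hβ.le]

/-- The fields `p` and `q` take the roles of `∇û` and `∇ũ`. -/
theorem stmt_8_general {Ω : Set (Euc N)} (hN : 3 ≤ N) (M : Coeff N Ω) {f : Euc N → ℝ}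
    (hf : MemL2 Ω 1 f) {p q : Euc N → Euc N} (hp : MemL2V Ω 0 p)
    (hweak : ∀ φ, IsTest Ω φ → ∫ x in Ω, ⟪M.A x (p x), gradient φ x⟫ = ∫ x in Ω, f x * φ x)
    (hg : MemG Ω (fun x ↦ p x - q x)) {β : ℝ} (hβ : 0 < β) {v w : Euc N → Euc N}
    {d : Euc N → ℝ} (hd : MemL2 Ω 1 d) (hdiv : IsWeakDiv Ω v d) (hw : IsAInv Ω M.A v w) :
    sqA Ω M.A (fun x ↦ p x - q x) ≤
      (M.α * cN N) ^ 2 * (1 + 1 / β) * sqL2 Ω 1 (fun x ↦ f x + d x) +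
        (1 + β) * sqA Ω M.A (fun x ↦ q x - w x) := by
  have hp₂ := memL2V_zero_iff.1 hp
  have majorant := M.nrmA_sub_le_majorant hN hp₂ (memL2V_zero_iff.1 hw.1) hg (hf.add hd)
    (M.isWeakDiv_residual hf hp₂ hweak hd hdiv hw)
  calc sqA Ω M.A (fun x ↦ p x - q x) = nrmA Ω M.A (fun x ↦ p x - q x) ^ 2 := (M.sq_nrmA _).symm
    _ ≤ (M.α * cN N * nrmL2 Ω 1 (fun x ↦ f x + d x) + nrmA Ω M.A (fun x ↦ q x - w x)) ^ 2 :=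
        pow_le_pow_left₀ (Real.sqrt_nonneg _) majorant 2
    _ ≤ (1 + 1 / β) * (M.α * cN N * nrmL2 Ω 1 (fun x ↦ f x + d x)) ^ 2 +
          (1 + β) * nrmA Ω M.A (fun x ↦ q x - w x) ^ 2 := sq_add_le_young hβ _ _
    _ = _ := by
        rw [mul_pow, sq_nrmL2, M.sq_nrmA]
        ring

/-- Quadratic form of the majorant:
`‖∇e‖²_A ≤ c_{N,α}²(1+1/β)‖f + div v‖²_{L²₊₁} + (1+β)‖∇ũ − A⁻¹v‖²_A`. -/
theorem stmt_8 (Ω : Set (Euc N)) (hΩ : IsOpen Ω) (hN : 3 ≤ N) (M : Coeff N Ω)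
    (f : Euc N → ℝ) (hf : MemL2 Ω 1 f)
    (uh : Euc N → ℝ) (gu : Euc N → Euc N)
    (huh : MemL2 Ω (-1) uh) (hgu : MemL2V Ω 0 gu) (hguw : IsWeakGrad Ω uh gu)
    (hweak : ∀ φ : Euc N → ℝ, IsTest Ω φ →
      (∫ x in Ω, ⟪M.A x (gu x), gradient φ x⟫) = ∫ x in Ω, f x * φ x)
    (ut : Euc N → ℝ) (gt : Euc N → Euc N)
    (hut : MemL2 Ω (-1) ut) (hgt : MemL2V Ω 0 gt) (hgtw : IsWeakGrad Ω ut gt)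
    (he : MemH10 Ω (fun x => uh x - ut x) (fun x => gu x - gt x)) :
    ∀ β : ℝ, 0 < β →
    ∀ (v : Euc N → Euc N) (dv : Euc N → ℝ) (w : Euc N → Euc N),
      MemL2V Ω 0 v → MemL2 Ω 1 dv → IsWeakDiv Ω v dv → IsAInv Ω M.A v w →
      sqA Ω M.A (fun x => gu x - gt x) ≤
        (M.α * cN N) ^ 2 * (1 + 1 / β) * sqL2 Ω 1 (fun x => f x + dv x) +
          (1 + β) * sqA Ω M.A (fun x => gt x - w x) :=
  fun _ hβ _ _ _ _ hdv hdiv hw ↦ stmt_8_general hN M hf hgu hweak he.memG hβ hdv hdiv hw
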